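/- For any two matrices G, H ∈ SL(2, ℂ[z,z⁻¹]), G can be irreducibly lifted from H in infinitely many different ways: the set of pairs (K, cascade), where K ∈ ℂˣ and the cascade is an irreducible lifting cascade (of any length, with arbitrary Laurent polynomial lifting filters) such that G = D_K · (product of the cascade) · H, is infinite. -/

import Mathlib

open LaurentPolynomial Matrix

noncomputable section

abbrev R2 : Type := LaurentPolynomial ℂ
abbrev SL2 : Type := Matrix.SpecialLinearGroup (Fin 2) R2

/-- Upper-triangular lifting matrix υ(S) = [[1, S],[0, 1]]. -/
def upl (S : R2) : SL2 := ⟨!![1, S; 0, 1], by simp [Matrix.det_fin_two_of]⟩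

/-- Lower-triangular lifting matrix λ(S) = [[1, 0],[S, 1]]. -/
def lowl (S : R2) : SL2 := ⟨!![1, 0; S, 1], by simp [Matrix.det_fin_two_of]⟩
/-- Gain scaling matrix D_K = diag(1/K, K) as an element of SL(2, ℂ[z,z⁻¹]). -/
def gain (K : ℂˣ) : SL2 :=
  ⟨!![C ((K⁻¹ : ℂˣ) : ℂ), 0; 0, C (K : ℂ)], by
    simp [Matrix.det_fin_two_of, ← _root_.map_mul, inv_mul_cancel₀ (Units.ne_zero K)]⟩
/-- A lifting step: an update characteristic (false = lowpass = υ, true = highpass = λ)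
together with a lifting filter. -/
def liftMat (p : Bool × R2) : SL2 := if p.1 then lowl p.2 else upl p.2

/-- The product of a lifting cascade `L = [(m₀,S₀),…,(m_{N-1},S_{N-1})]`,
namely `M_{N-1} ⋯ M_1 M_0`. -/
def cascListProd (L : List (Bool × R2)) : SL2 := (L.reverse.map liftMat).prod

/-- A cascade is irreducible if all lifting filters are nonzero and consecutive
update characteristics differ. -/
def IrredList (L : List (Bool × R2)) : Prop :=
  (∀ p ∈ L, p.2 ≠ 0) ∧ L.Chain' (fun p q => p.1 ≠ q.1)

/-! In `SL(2, R)` the elementary matrices `a = υ(1)` and `b = λ(-1)` satisfy the braid relation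
`a * b * a = b * a * b`. Irreducible cascades are the reduced words of the free product of two
copies of the additive group of `R`, and the braid relator is a reduced word beginning and ending
in different factors, hence of infinite order. So the homomorphism evaluating cascades has infinite
kernel, and every matrix that is the product of some cascade is the product of infinitely many
irreducible ones. Over a localization of a Euclidean domain, such as `ℂ[z,z⁻¹]`, the Euclidean
algorithm on the first row shows that every matrix is such a product. -/

section FreeProduct

open Monoid.CoprodI

variable {ι : Type*} {M : ι → Type*} [∀ i, Monoid (M i)] {i j : ι}

lemma neWord_prod_ne_one (w : NeWord M i j) : w.prod ≠ 1 := by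
  classical
  intro h
  have hw : w.toWord = Word.empty := Word.equiv.symm.injective (h.trans Word.prod_empty.symm)
  exact w.toList_ne_nil (congrArg Word.toList hw)

lemma exists_neWord_prod_eq_pow_succ (w : NeWord M i j) (hij : j ≠ i) (n : ℕ) :
    ∃ w' : NeWord M i j, w'.prod = w.prod ^ (n + 1) := by
  induction n with
  | zero => exact ⟨w, by rw [zero_add, pow_one]⟩
  | succ n ih =>
    obtain ⟨w', hw'⟩ := ih
    exact ⟨w'.append hij w, by rw [NeWord.append_prod, hw', ← pow_succ]⟩

lemma not_isOfFinOrder_neWord_prod (w : NeWord M i j) (hij : j ≠ i) : ¬ IsOfFinOrder w.prod := by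
  rw [isOfFinOrder_iff_pow_eq_one]
  rintro ⟨n, hn, hpow⟩
  obtain ⟨w', hw'⟩ := exists_neWord_prod_eq_pow_succ w hij (n - 1)
  rw [Nat.sub_add_cancel hn, hpow] at hw'
  exact neWord_prod_ne_one w' hw'

end FreeProduct

lemma infinite_ker_of_not_isOfFinOrder {G N : Type*} [Group G] [Group N] {f : G →* N} {x : G}
    (hx : f x = 1) (hord : ¬ IsOfFinOrder x) : Infinite f.ker :=
  Set.infinite_coe_iff.2 <| Set.infinite_of_injective_forall_mem
    (injective_pow_iff_not_isOfFinOrder.2 hord)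
    fun n => by rw [SetLike.mem_coe, MonoidHom.mem_ker, map_pow, hx, one_pow]

section Cascades

open Monoid.CoprodI

variable {R : Type*} [CommRing R]

/-- The lifting step with update characteristic `m` and filter `S` over an arbitrary commutative
ring: `υ(S)` for `m = false` and `λ(S)` for `m = true`. -/
def liftingStep (m : Bool) (S : R) : SpecialLinearGroup (Fin 2) R :=
  if m then .transvection one_ne_zero S else .transvection zero_ne_one S

lemma coe_liftingStep_false (S : R) :
    (liftingStep false S : Matrix (Fin 2) (Fin 2) R) = !![1, S; 0, 1] := by
  ext i j
  fin_cases i <;> fin_cases j <;> simp [liftingStep, SpecialLinearGroup.transvection_coe]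

lemma coe_liftingStep_true (S : R) :
    (liftingStep true S : Matrix (Fin 2) (Fin 2) R) = !![1, 0; S, 1] := by
  ext i j
  fin_cases i <;> fin_cases j <;> simp [liftingStep, SpecialLinearGroup.transvection_coe]

lemma liftingStep_zero (m : Bool) : liftingStep m (0 : R) = 1 := by
  cases m <;> simp [liftingStep]

lemma liftingStep_add (m : Bool) (S T : R) :
    liftingStep m (S + T) = liftingStep m S * liftingStep m T := by
  cases m <;> simp [liftingStep, SpecialLinearGroup.transvection_add]

/-- The product `M_{N-1} ⋯ M_1 M_0` of a lifting cascade over an arbitrary commutative ring. -/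
def cascadeProd (L : List (Bool × R)) : SpecialLinearGroup (Fin 2) R :=
  (L.reverse.map fun p => liftingStep p.1 p.2).prod

/-- Irreducibility of a lifting cascade over an arbitrary ring: no filter vanishes, and
consecutive update characteristics differ. -/
def IsIrreducibleCascade (L : List (Bool × R)) : Prop :=
  (∀ p ∈ L, p.2 ≠ 0) ∧ L.IsChain fun p q => p.1 ≠ q.1

variable (R) in
/-- Evaluation of formal products of lifting steps as matrices. The source is the free product of
two copies of the additive group of `R`, indexed by the update characteristics; its reduced words
encode irreducible cascades. -/
def liftingHom :
    Monoid.CoprodI (fun _ : Bool => Multiplicative R) →* SpecialLinearGroup (Fin 2) R :=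
  lift fun m =>
    { toFun := fun S => liftingStep m S.toAdd
      map_one' := liftingStep_zero m
      map_mul' := fun S T => liftingStep_add m S.toAdd T.toAdd }

lemma liftingHom_of (m : Bool) (S : Multiplicative R) :
    liftingHom R (of (i := m) S) = liftingStep m S.toAdd :=
  lift_of _ _

/-- The cascade spelled by a reduced word. The order is reversed because the last step of a
cascade is the leftmost factor of its product. -/
def cascadeOfWord (w : Word fun _ : Bool => Multiplicative R) : List (Bool × R) :=
  (w.toList.map fun l => (l.1, l.2.toAdd)).reverse

lemma cascadeOfWord_injective : Function.Injective (cascadeOfWord (R := R)) := by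
  have hletter : Function.Injective
      fun l : Σ _ : Bool, Multiplicative R => (l.1, l.2.toAdd) :=
    (Equiv.sigmaEquivProd Bool R).injective
  intro w w' h
  exact Word.ext (hletter.list_map (List.reverse_injective h))

lemma isIrreducibleCascade_cascadeOfWord (w : Word fun _ : Bool => Multiplicative R) :
    IsIrreducibleCascade (cascadeOfWord w) := by
  constructor
  · intro p hp
    obtain ⟨l, hl, rfl⟩ := List.mem_map.1 (List.mem_reverse.1 hp)
    exact w.ne_one l hl
  · rw [cascadeOfWord, List.isChain_reverse, List.isChain_map]
    exact w.chain_ne.imp fun _ _ h => h.symm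

lemma cascadeProd_cascadeOfWord (w : Word fun _ : Bool => Multiplicative R) :
    cascadeProd (cascadeOfWord w) = liftingHom R w.prod := by
  simp only [cascadeProd, cascadeOfWord, List.reverse_reverse, List.map_map, Word.prod,
    map_list_prod, Function.comp_def, liftingHom_of]

variable (R) in
/-- The braid relator `a b a b⁻¹ a⁻¹ b⁻¹`, where `a = υ(1)` and `b = λ(-1)`: a reduced word of
infinite order in the free product which evaluates to the identity matrix. -/
def braidRelator [Nontrivial R] : NeWord (fun _ : Bool => Multiplicative R) false true :=
  let letter (m : Bool) (S : R) (hS : S ≠ 0) :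
    NeWord (fun _ : Bool => Multiplicative R) m m := .singleton (.ofAdd S) hS
  let one (m : Bool) := letter m 1 one_ne_zero
  let negOne (m : Bool) := letter m (-1) (neg_ne_zero.2 one_ne_zero)
  ((one false).append Bool.false_ne_true (negOne true)).append Bool.false_ne_true.symm
    (((one false).append Bool.false_ne_true (one true)).append Bool.false_ne_true.symm
      ((negOne false).append Bool.false_ne_true (one true)))

lemma liftingHom_braidRelator [Nontrivial R] : liftingHom R (braidRelator R).prod = 1 := by
  apply Subtype.ext
  simp [braidRelator, NeWord.prod, Word.prod, NeWord.toWord, liftingHom_of,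
    coe_liftingStep_false, coe_liftingStep_true, Matrix.one_fin_two]

lemma infinite_ker_liftingHom [Nontrivial R] : Infinite (liftingHom R).ker :=
  infinite_ker_of_not_isOfFinOrder liftingHom_braidRelator
    (not_isOfFinOrder_neWord_prod _ Bool.false_ne_true.symm)

theorem infinite_setOf_cascadeProd_eq [Nontrivial R] {M : SpecialLinearGroup (Fin 2) R}
    (hM : M ∈ (liftingHom R).range) :
    {L : List (Bool × R) | IsIrreducibleCascade L ∧ cascadeProd L = M}.Infinite := by
  classical
  obtain ⟨x, rfl⟩ := hM
  have := infinite_ker_liftingHom (R := R)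
  have : Infinite (liftingHom R ⁻¹' {liftingHom R x}) :=
    .of_injective _ ((liftingHom R).fiberEquivKer x).symm.injective
  refine Set.infinite_of_injective_forall_mem
    (f := fun y : liftingHom R ⁻¹' {liftingHom R x} => cascadeOfWord (Word.equiv y.1))
    (cascadeOfWord_injective.comp (Word.equiv.injective.comp Subtype.val_injective))
    fun y => ⟨isIrreducibleCascade_cascadeOfWord _, ?_⟩
  calc cascadeProd (cascadeOfWord (Word.equiv y.1))
      = liftingHom R (Word.equiv.symm (Word.equiv y.1)) := cascadeProd_cascadeOfWord _
    _ = liftingHom R y.1 := by rw [Equiv.symm_apply_apply]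
    _ = liftingHom R x := y.2

end Cascades

section Euclidean

variable {R : Type*} [CommRing R]

lemma liftingStep_mem_range (m : Bool) (S : R) : liftingStep m S ∈ (liftingHom R).range :=
  ⟨_, liftingHom_of m (.ofAdd S)⟩

lemma mem_range_liftingHom_of_apply_zero_zero {M : SpecialLinearGroup (Fin 2) R}
    (h : M 0 0 = 0) : M ∈ (liftingHom R).range := by
  have hdet : M 0 1 * M 1 0 = -1 := by
    have := M.det_coe
    rw [Matrix.det_fin_two, h] at this
    linear_combination -this
  have hM : M = liftingStep false (M 0 1) * liftingStep true (M 1 0) *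
      liftingStep false (M 0 1 * (1 - M 1 1)) := by
    ext i j
    fin_cases i <;> fin_cases j <;>
      simp [coe_liftingStep_false, coe_liftingStep_true, Matrix.mul_apply, h] <;> grind
  rw [hM]
  exact mul_mem (mul_mem (liftingStep_mem_range _ _) (liftingStep_mem_range _ _))
    (liftingStep_mem_range _ _)

variable (R) in
/-- The Weyl element of `SL(2, R)`: multiplying by it on the right exchanges the columns up to
sign, as the Euclidean algorithm requires after each division. -/
def weylElement : SpecialLinearGroup (Fin 2) R := ⟨!![0, -1; 1, 0], by simp [det_fin_two_of]⟩

lemma coe_weylElement : (weylElement R : Matrix (Fin 2) (Fin 2) R) = !![0, -1; 1, 0] := rfl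

lemma weylElement_mem_range : weylElement R ∈ (liftingHom R).range :=
  mem_range_liftingHom_of_apply_zero_zero rfl

lemma coe_mul_liftingStep_mul_weylElement (M : SpecialLinearGroup (Fin 2) R) (S : R) :
    (↑(M * liftingStep false S * weylElement R) : Matrix (Fin 2) (Fin 2) R) =
      !![M 0 0 * S + M 0 1, -M 0 0; M 1 0 * S + M 1 1, -M 1 0] := by
  ext i j
  fin_cases i <;> fin_cases j <;>
    simp [coe_liftingStep_false, coe_weylElement, Matrix.mul_apply]

lemma exists_eq_algebraMap_mul_unit {A : Type*} [CommRing A] [Algebra A R] (N : Submonoid A)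
    [IsLocalization N R] (x : R) :
    ∃ (p : A) (u : Rˣ), x = algebraMap A R p * u := by
  obtain ⟨p, s, rfl⟩ := IsLocalization.exists_mk'_eq N x
  refine ⟨p, (IsLocalization.map_units R s).unit⁻¹, ?_⟩
  rw [Units.eq_mul_inv_iff_mul_eq, IsUnit.unit_spec, IsLocalization.mk'_spec]

variable {A : Type*} [EuclideanDomain A] [Algebra A R]

-- The unit factors absorb both the denominators and the signs produced by `weylElement`.
lemma mem_range_liftingHom_of_row_eq (p q : A) (u v : Rˣ) (M : SpecialLinearGroup (Fin 2) R)
    (hp : M 0 0 = algebraMap A R p * u) (hq : M 0 1 = algebraMap A R q * v) :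
    M ∈ (liftingHom R).range := by
  induction p, q using EuclideanDomain.GCD.induction generalizing u v M with
  | H0 q => exact mem_range_liftingHom_of_apply_zero_zero (by rw [hp, map_zero, zero_mul])
  | H1 p q _ ih =>
    let S : R := -(algebraMap A R (q / p) * v * (u⁻¹ : Rˣ))
    have hdiv : algebraMap A R q =
        algebraMap A R p * algebraMap A R (q / p) + algebraMap A R (q % p) := by
      rw [← map_mul, ← map_add, EuclideanDomain.div_add_mod]
    have hremainder : (M * liftingStep false S * weylElement R) 0 0 =
        algebraMap A R (q % p) * v := by
      calc (M * liftingStep false S * weylElement R) 0 0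
          = M 0 0 * S + M 0 1 := congrFun₂ (coe_mul_liftingStep_mul_weylElement M S) 0 0
        _ = algebraMap A R (q % p) * v := by
          rw [hp, hq]
          linear_combination (v : R) * hdiv -
            algebraMap A R p * algebraMap A R (q / p) * v * u.mul_inv
    have hdivisor : (M * liftingStep false S * weylElement R) 0 1 =
        algebraMap A R p * (-u : Rˣ) := by
      calc (M * liftingStep false S * weylElement R) 0 1
          = -M 0 0 := congrFun₂ (coe_mul_liftingStep_mul_weylElement M S) 0 1
        _ = algebraMap A R p * (-u : Rˣ) := by rw [hp, Units.val_neg, mul_neg]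
    have hmem := ih v (-u) (M * liftingStep false S * weylElement R) hremainder hdivisor
    rwa [Subgroup.mul_mem_cancel_right _ weylElement_mem_range,
      Subgroup.mul_mem_cancel_right _ (liftingStep_mem_range _ _)] at hmem

lemma mem_range_liftingHom (N : Submonoid A) [IsLocalization N R]
    (M : SpecialLinearGroup (Fin 2) R) : M ∈ (liftingHom R).range := by
  obtain ⟨p, u, hp⟩ := exists_eq_algebraMap_mul_unit N (M 0 0)
  obtain ⟨q, v, hq⟩ := exists_eq_algebraMap_mul_unit N (M 0 1)
  exact mem_range_liftingHom_of_row_eq p q u v M hp hq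

theorem stmt6_general [Nontrivial R] (N : Submonoid A) [IsLocalization N R]
    (D G H : SpecialLinearGroup (Fin 2) R) :
    {L : List (Bool × R) |
        IsIrreducibleCascade L ∧ G = D * cascadeProd L * H}.Infinite := by
  refine (infinite_setOf_cascadeProd_eq (mem_range_liftingHom N (D⁻¹ * G * H⁻¹))).mono ?_
  rintro L ⟨hL, hprod⟩
  exact ⟨hL, by rw [hprod]; group⟩

end Euclidean

lemma liftMat_eq_liftingStep (p : Bool × R2) : liftMat p = liftingStep p.1 p.2 := by
  obtain ⟨m, S⟩ := p
  cases m
  · exact Subtype.ext (coe_liftingStep_false S).symm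
  · exact Subtype.ext (coe_liftingStep_true S).symm

lemma cascListProd_eq_cascadeProd : cascListProd = cascadeProd (R := R2) := by
  funext L
  rw [cascListProd, cascadeProd, funext liftMat_eq_liftingStep]

/-- any G ∈ SL(2, ℂ[z,z⁻¹]) can be irreducibly lifted from any
H ∈ SL(2, ℂ[z,z⁻¹]) in infinitely many different ways. -/
theorem stmt6 (G H : SL2) :
    {P : ℂˣ × List (Bool × R2) |
        IrredList P.2 ∧ G = gain P.1 * cascListProd P.2 * H}.Infinite := by
  rw [cascListProd_eq_cascadeProd]
  exact ((stmt6_general (Submonoid.powers (Polynomial.X : Polynomial ℂ)) (gain 1) G H).image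
    (Prod.mk_right_injective 1).injOn).mono (Set.image_subset_iff.2 fun _ hL => hL)
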